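/- arXiv:math/0505227 — 4 statements merged into one kernel-verified Lean document; each statement's English description precedes it below -/
import Mathlib

section
/- Let E be a finite-dimensional real inner product space and d : E → E a linear map with d ∘ d = 0; let d* denote the adjoint of d, characterized by ⟨d* x, y⟩ = ⟨x, d y⟩ for all x, y ∈ E. Define the harmonic subspace H = ker d ∩ ker d*. Then E is the internal orthogonal direct sum of the three pairwise-orthogonal subspaces range d, H, and range d*. -/
open scoped RealInnerProductSpace

/-- Combinatorial Hodge decomposition (Eckmann): for a finite-dimensional real inner
product space `E` with `d : E →ₗ E`, `d ∘ d = 0`, and adjoint `dstar`, the space `E`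
is the internal orthogonal direct sum of `range d`, the harmonic subspace
`ker d ⊓ ker dstar`, and `range dstar`. -/
theorem stmt0 (E : Type*) [NormedAddCommGroup E] [InnerProductSpace ℝ E]
    [FiniteDimensional ℝ E] (d dstar : E →ₗ[ℝ] E)
    (hd : d ∘ₗ d = 0)
    (hadj : ∀ x y : E, ⟪dstar x, y⟫ = ⟪x, d y⟫) :
    (∀ x ∈ LinearMap.range d,
      ∀ y ∈ (LinearMap.ker d ⊓ LinearMap.ker dstar : Submodule ℝ E), ⟪x, y⟫ = 0) ∧
    (∀ x ∈ LinearMap.range d, ∀ y ∈ LinearMap.range dstar, ⟪x, y⟫ = 0) ∧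
    (∀ x ∈ (LinearMap.ker d ⊓ LinearMap.ker dstar : Submodule ℝ E),
      ∀ y ∈ LinearMap.range dstar, ⟪x, y⟫ = 0) ∧
    LinearMap.range d ⊔ (LinearMap.ker d ⊓ LinearMap.ker dstar) ⊔ LinearMap.range dstar = ⊤ := by
  have hdd : ∀ x, d (d x) = 0 := fun x => LinearMap.congr_fun hd x
  refine ⟨?_, ?_, ?_, ?_⟩
  · rintro _ ⟨x, rfl⟩ y ⟨_, hy⟩
    have hy' : dstar y = 0 := hy
    rw [real_inner_comm, ← hadj, hy', inner_zero_left]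
  · rintro _ ⟨x, rfl⟩ _ ⟨y, rfl⟩
    rw [real_inner_comm, hadj, hdd, inner_zero_right]
  · rintro x ⟨hx, _⟩ _ ⟨y, rfl⟩
    have hx' : d x = 0 := hx
    rw [real_inner_comm, hadj, hx', inner_zero_right]
  · rw [← Submodule.orthogonal_eq_bot_iff, Submodule.eq_bot_iff]
    intro x hx
    rw [Submodule.mem_orthogonal] at hx
    have h1 : dstar x = 0 := by
      have h := hx (d (dstar x))
        (Submodule.mem_sup_left (Submodule.mem_sup_left ⟨_, rfl⟩))
      rw [real_inner_comm, ← hadj] at h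
      exact inner_self_eq_zero.mp h
    have h2 : d x = 0 := by
      have h := hx (dstar (d x)) (Submodule.mem_sup_right ⟨_, rfl⟩)
      rw [hadj] at h
      exact inner_self_eq_zero.mp h
    exact inner_self_eq_zero.mp
      (hx x (Submodule.mem_sup_left (Submodule.mem_sup_right ⟨h2, h1⟩)))
end

section
/- Assume the pairings satisfy the identity P_{j+1}(δσ, τ) = (−1)^{j+1} P_j(σ, δτ) for all σ ∈ C^j and τ ∈ C^{n−j−1} (this identity follows from δ being a derivation of the cup product on a closed manifold). Then the combinatorial star operator is a chain map up to sign: for all σ ∈ C^j, ★(δσ) = (−1)^{j+1} δ*(★σ). -/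
open scoped RealInnerProductSpace

/-- The combinatorial star operator is a chain map up to sign:
`★(δσ) = (−1)^{j+1} δ*(★σ)`.  Here `Cj, Cj1, Cnj1, Cnj` model the cochain groups
`C^j, C^{j+1}, C^{n−j−1}, C^{n−j}` of a triangulated closed oriented `n`-manifold,
`P` and `Q` model the Poincaré duality pairings `(σ, τ) ↦ (σ ∪ τ)[M]` in degrees
`j` and `j+1`, `δ` is the coboundary, `δ'` is the coboundary `C^{n−j−1} → C^{n−j}`
with adjoint `δ'star`, and `star1`, `star2` are the star operators in degrees
`j` and `j+1`, characterized by `⟪★σ, τ⟫ = P σ τ`. -/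
theorem stmt2 (n j : ℕ) (hjn : j + 1 ≤ n)
    (Cj Cj1 Cnj1 Cnj : Type*)
    [NormedAddCommGroup Cj] [InnerProductSpace ℝ Cj] [FiniteDimensional ℝ Cj]
    [NormedAddCommGroup Cj1] [InnerProductSpace ℝ Cj1] [FiniteDimensional ℝ Cj1]
    [NormedAddCommGroup Cnj1] [InnerProductSpace ℝ Cnj1] [FiniteDimensional ℝ Cnj1]
    [NormedAddCommGroup Cnj] [InnerProductSpace ℝ Cnj] [FiniteDimensional ℝ Cnj]
    (δ : Cj →ₗ[ℝ] Cj1) (δ' : Cnj1 →ₗ[ℝ] Cnj) (δ'star : Cnj →ₗ[ℝ] Cnj1)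
    (P : Cj →ₗ[ℝ] Cnj →ₗ[ℝ] ℝ) (Q : Cj1 →ₗ[ℝ] Cnj1 →ₗ[ℝ] ℝ)
    (star1 : Cj →ₗ[ℝ] Cnj) (star2 : Cj1 →ₗ[ℝ] Cnj1)
    (hadj : ∀ (x : Cnj) (y : Cnj1), ⟪δ'star x, y⟫ = ⟪x, δ' y⟫)
    (hstar1 : ∀ (σ : Cj) (τ : Cnj), ⟪star1 σ, τ⟫ = P σ τ)
    (hstar2 : ∀ (σ : Cj1) (τ : Cnj1), ⟪star2 σ, τ⟫ = Q σ τ)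
    (hderiv : ∀ (σ : Cj) (τ : Cnj1), Q (δ σ) τ = (-1 : ℝ) ^ (j + 1) * P σ (δ' τ)) :
    ∀ σ : Cj, star2 (δ σ) = ((-1 : ℝ) ^ (j + 1)) • δ'star (star1 σ) := by
  intro σ
  refine ext_inner_right ℝ fun τ => ?_
  rw [real_inner_smul_left, hstar2, hderiv, hadj, hstar1]
end

section
/- Let g ≥ 1 and let V ⊆ ℂ^g × ℂ^g be a complex subspace of dimension g. Assume the bilinear relations: for all (A, B), (A', B') ∈ V, Σ_{i=1}^g (A_i B'_i − B_i A'_i) = 0; and the positivity condition: for all nonzero (A, B) ∈ V, the complex number i · Σ_{i=1}^g (A_i conj(B_i) − B_i conj(A_i)) is a positive real number. Then: (a) the projection π : V → ℂ^g, (A, B) ↦ A, is a linear isomorphism; (b) letting σ_j = π^{-1}(e_j) for the standard basis vectors e_j of ℂ^g, and defining the g × g period matrix Π by Π_{jk} = (B-component of σ_j)_k, the matrix Π is symmetric (Π_{jk} = Π_{kj}) and its imaginary part Im Π is positive definite as a real symmetric matrix. -/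
/-- Combinatorial period matrix of a genus-`g` surface.  `V ⊆ ℂ^g × ℂ^g` is the
`g`-dimensional space of (A-periods, B-periods) of holomorphic 1-cochains, satisfying
Riemann's bilinear relations and the positivity condition.  Then (a) projection onto
the A-periods is an isomorphism `V ≅ ℂ^g`, and (b) for the basis `σ_j` of `V` whose
A-periods are the standard basis vectors, the period matrix `Π_{jk} = (σ_j)_B(k)`
is symmetric with positive definite imaginary part. -/
theorem stmt6 (g : ℕ) (hg : 1 ≤ g) (V : Submodule ℂ ((Fin g → ℂ) × (Fin g → ℂ)))
    (hdim : Module.finrank ℂ V = g)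
    (hbil : ∀ p ∈ V, ∀ q ∈ V,
      ∑ i : Fin g, (p.1 i * q.2 i - p.2 i * q.1 i) = 0)
    (hpos : ∀ p ∈ V, p ≠ 0 → ∃ r : ℝ, 0 < r ∧
      Complex.I * ∑ i : Fin g,
        (p.1 i * (starRingEnd ℂ) (p.2 i) - p.2 i * (starRingEnd ℂ) (p.1 i)) = (r : ℂ)) :
    Function.Bijective ((LinearMap.fst ℂ (Fin g → ℂ) (Fin g → ℂ)).comp V.subtype) ∧
    ∀ σ : Fin g → V,
      (∀ j k : Fin g, (σ j : (Fin g → ℂ) × (Fin g → ℂ)).1 k = if j = k then 1 else 0) →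
      ((∀ j k : Fin g,
          (σ j : (Fin g → ℂ) × (Fin g → ℂ)).2 k = (σ k : (Fin g → ℂ) × (Fin g → ℂ)).2 j) ∧
       ∀ c : Fin g → ℝ, c ≠ 0 →
         0 < ∑ j : Fin g, ∑ k : Fin g,
               c j * c k * ((σ j : (Fin g → ℂ) × (Fin g → ℂ)).2 k).im) := by
  have hinj : Function.Injective
      ((LinearMap.fst ℂ (Fin g → ℂ) (Fin g → ℂ)).comp V.subtype) := by
    rw [injective_iff_map_eq_zero]
    rintro ⟨p, hp⟩ h
    have h1 : p.1 = 0 := h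
    by_contra hne
    have hne' : p ≠ 0 := fun h0 => hne (Subtype.ext h0)
    obtain ⟨r, hr, he⟩ := hpos p hp hne'
    simp [h1] at he
    exact hr.ne (by exact_mod_cast he)
  refine ⟨⟨hinj, ?_⟩, ?_⟩
  · refine (LinearMap.injective_iff_surjective_of_finrank_eq_finrank ?_).1 hinj
    rw [hdim]; simp
  · intro σ hσ
    refine ⟨?_, ?_⟩
    · intro j k
      have h := hbil (σ j) (σ j).2 (σ k) (σ k).2
      simp [hσ, Finset.sum_sub_distrib] at h
      exact (sub_eq_zero.1 h).symm
    · intro c hc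
      set p : V := ∑ j, (c j : ℂ) • σ j with hp
      have hA : ∀ k, (p : (Fin g → ℂ) × (Fin g → ℂ)).1 k = c k := by
        intro k
        simp [hp, Prod.fst_sum, Finset.sum_apply, hσ]
      have hB : ∀ k, ((p : (Fin g → ℂ) × (Fin g → ℂ)).2 k).im
          = ∑ j, c j * ((σ j : (Fin g → ℂ) × (Fin g → ℂ)).2 k).im := by
        intro k
        simp [hp, Prod.snd_sum, Finset.sum_apply]
      have hne : (p : (Fin g → ℂ) × (Fin g → ℂ)) ≠ 0 := by
        intro h0
        apply hc
        funext k
        have := hA k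
        rw [h0] at this
        simpa using this.symm
      obtain ⟨r, hr, he⟩ := hpos p p.2 hne
      have hre := congrArg Complex.re he
      simp only [hA, Complex.conj_ofReal, Complex.I_mul_re, Complex.im_sum, Complex.sub_im,
        Complex.im_ofReal_mul, Complex.im_mul_ofReal, Complex.conj_im, Complex.ofReal_re, hB]
        at hre
      have e : r = 2 * ∑ j : Fin g, ∑ k : Fin g,
               c j * c k * ((σ j : (Fin g → ℂ) × (Fin g → ℂ)).2 k).im := by
        rw [← hre, Finset.sum_comm, Finset.mul_sum, ← Finset.sum_neg_distrib]
        refine Finset.sum_congr rfl fun k _ => ?_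
        have : ∑ j, c j * c k * ((σ j : (Fin g → ℂ) × (Fin g → ℂ)).2 k).im
            = c k * ∑ j, c j * ((σ j : (Fin g → ℂ) × (Fin g → ℂ)).2 k).im := by
          rw [Finset.mul_sum]
          exact Finset.sum_congr rfl fun j _ => by ring
        rw [this]; ring
      linarith
end

section
/- Let R be a commutative ring, A a commutative R-algebra, M an A-module, and d : A → M an R-linear derivation. Let n ≥ 1 and let μ_0, μ_1, …, μ_n ∈ A satisfy Σ_{i=0}^n μ_i = 1. For a subset I = {i_1 < i_2 < ⋯ < i_m} of {1, …, n} and an index r ∈ {0, 1, …, n} \ I, define the element W(r, I) of the m-th exterior power Λ^m_A M by W(r, I) = m! · [ μ_r · dμ_{i_1} ∧ ⋯ ∧ dμ_{i_m} + Σ_{s=1}^m (−1)^s μ_{i_s} · dμ_r ∧ dμ_{i_1} ∧ ⋯ ∧ (omit dμ_{i_s}) ∧ ⋯ ∧ dμ_{i_m} ]. Then W(0, I) = m! · dμ_{i_1} ∧ ⋯ ∧ dμ_{i_m} − Σ_{r ∈ {1,…,n} \ I} W(r, I). -/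
/-- The algebraic Whitney form `W(r, I)`, an element of the exterior algebra of `M`
over `A`: for barycentric coordinates `μ_0, …, μ_n` and `I = {f 0 < f 1 < ⋯}` a set
of `m` indices, `W(r, I) = m! [ μ_r dμ_{i_1} ∧ ⋯ ∧ dμ_{i_m}
+ Σ_{s=1}^m (−1)^s μ_{i_s} dμ_r ∧ dμ_{i_1} ∧ ⋯ (omit s) ⋯ ∧ dμ_{i_m} ]`. -/
noncomputable def whitneyForm {R A M : Type*} [CommRing R] [CommRing A] [Algebra R A]
    [AddCommGroup M] [Module R M] [Module A M] [IsScalarTower R A M]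
    (d : Derivation R A M) {n m : ℕ} (μ : Fin (n + 1) → A)
    (f : Fin m → Fin (n + 1)) (r : Fin (n + 1)) : ExteriorAlgebra A M :=
  (Nat.factorial m) •
    (μ r • (List.ofFn fun s : Fin m => ExteriorAlgebra.ι A (d (μ (f s)))).prod +
     ∑ s : Fin m, ((-1 : ℤ) ^ ((s : ℕ) + 1)) •
       (μ (f s) • (ExteriorAlgebra.ι A (d (μ r)) *
         ((List.ofFn fun t : Fin m => ExteriorAlgebra.ι A (d (μ (f t)))).eraseIdx
           (s : ℕ)).prod)))

theorem wf_swap {A M : Type*} [CommRing A] [AddCommGroup M] [Module A M] (v a : M)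
    (X : ExteriorAlgebra A M) :
    ExteriorAlgebra.ι A v * (ExteriorAlgebra.ι A a * X) =
      -(ExteriorAlgebra.ι A a * (ExteriorAlgebra.ι A v * X)) := by
  have h := ExteriorAlgebra.ι_add_mul_swap (R := A) v a
  rw [← mul_assoc, ← mul_assoc, eq_neg_of_add_eq_zero_left h, neg_mul]

theorem wf_same {A M : Type*} [CommRing A] [AddCommGroup M] [Module A M] :
    ∀ (l : List M) (k : ℕ) (hk : k < l.length),
    ExteriorAlgebra.ι A l[k] * ((l.map (ExteriorAlgebra.ι A)).eraseIdx k).prod =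
      ((-1 : ℤ) ^ k) • (l.map (ExteriorAlgebra.ι A)).prod
  | [], k, hk => by simp at hk
  | a :: l, 0, hk => by simp
  | a :: l, k + 1, hk => by
    have ih := wf_same (A := A) l k (by simpa using hk)
    simp only [List.getElem_cons_succ, List.map_cons, List.eraseIdx_cons_succ, List.prod_cons]
    rw [wf_swap, ih, mul_smul_comm, pow_succ, mul_neg_one, neg_smul]

theorem wf_mem {A M : Type*} [CommRing A] [AddCommGroup M] [Module A M] (v : M) :
    ∀ (l : List M), v ∈ l →
    ExteriorAlgebra.ι A v * (l.map (ExteriorAlgebra.ι A)).prod = 0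
  | [], h => by simp at h
  | a :: l, h => by
    rw [List.map_cons, List.prod_cons]
    rcases List.mem_cons.1 h with rfl | h
    · rw [← mul_assoc, ExteriorAlgebra.ι_sq_zero, zero_mul]
    · rw [wf_swap, wf_mem v l h, mul_zero, neg_zero]

theorem wf_zero {R A M : Type*} [CommRing R] [CommRing A] [Algebra R A]
    [AddCommGroup M] [Module R M] [Module A M] [IsScalarTower R A M]
    (d : Derivation R A M) {n m : ℕ} (μ : Fin (n + 1) → A)
    (f : Fin m → Fin (n + 1)) (t : Fin m) : whitneyForm d μ f (f t) = 0 := by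
  unfold whitneyForm
  have hl : (List.ofFn fun s : Fin m => ExteriorAlgebra.ι A (d (μ (f s)))) =
      (List.ofFn fun s : Fin m => d (μ (f s))).map (ExteriorAlgebra.ι A) := by
    rw [List.map_ofFn]; rfl
  rw [hl, Finset.sum_eq_single t]
  · have h := wf_same (A := A) (List.ofFn fun s : Fin m => d (μ (f s))) t (by simp)
    simp only [List.getElem_ofFn, Fin.eta] at h
    rw [h, smul_comm (μ (f t)), smul_smul, pow_succ, mul_neg_one, neg_mul, ← mul_pow]
    simp
  · intro s _ hs
    rw [List.eraseIdx_map, wf_mem, smul_zero, smul_zero]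
    rw [List.mem_eraseIdx_iff_getElem]
    exact ⟨t, by simp, fun h => hs (Fin.ext h).symm, by simp⟩
  · simp

theorem wf_sum {R A M : Type*} [CommRing R] [CommRing A] [Algebra R A]
    [AddCommGroup M] [Module R M] [Module A M] [IsScalarTower R A M]
    (d : Derivation R A M) {n m : ℕ} (μ : Fin (n + 1) → A)
    (hμ : ∑ i : Fin (n + 1), μ i = 1)
    (f : Fin m → Fin (n + 1)) : ∑ r, whitneyForm d μ f r = (Nat.factorial m) •
          (List.ofFn fun s : Fin m => ExteriorAlgebra.ι A (d (μ (f s)))).prod := by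
  unfold whitneyForm
  rw [← Finset.smul_sum, Finset.sum_add_distrib, ← Finset.sum_smul, hμ, one_smul,
    Finset.sum_comm]
  have h0 : ∑ i, ExteriorAlgebra.ι A (d (μ i)) = 0 := by
    rw [← map_sum, ← map_sum, hμ, Derivation.map_one_eq_zero, map_zero]
  simp only [← Finset.smul_sum, ← Finset.sum_mul, h0, zero_mul, smul_zero,
    Finset.sum_const_zero, add_zero]

/-- Whitney's lemma, algebraically: if `μ_0 + μ_1 + ⋯ + μ_n = 1` and
`I = {f 0 < ⋯ < f (m-1)} ⊆ {1, …, n}`, then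
`W(0, I) = m! dμ_{i_1} ∧ ⋯ ∧ dμ_{i_m} − Σ_{r ∈ {1,…,n} \ I} W(r, I)`. -/
theorem stmt14 {R A M : Type*} [CommRing R] [CommRing A] [Algebra R A]
    [AddCommGroup M] [Module R M] [Module A M] [IsScalarTower R A M]
    (d : Derivation R A M) (n m : ℕ) (hn : 1 ≤ n)
    (μ : Fin (n + 1) → A) (hμ : ∑ i : Fin (n + 1), μ i = 1)
    (f : Fin m → Fin (n + 1)) (hf : StrictMono f) (hf0 : ∀ s : Fin m, f s ≠ 0) :
    whitneyForm d μ f 0 =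
      (Nat.factorial m) •
          (List.ofFn fun s : Fin m => ExteriorAlgebra.ι A (d (μ (f s)))).prod -
        ∑ r ∈ Finset.univ.filter
            (fun r : Fin (n + 1) => r ≠ 0 ∧ ∀ s : Fin m, f s ≠ r),
          whitneyForm d μ f r := by
  classical
  rw [← wf_sum d μ hμ f, eq_sub_iff_add_eq,
    ← Finset.sum_insert (s := Finset.univ.filter
            (fun r : Fin (n + 1) => r ≠ 0 ∧ ∀ s : Fin m, f s ≠ r)) (by simp)]
  apply Finset.sum_subset (Finset.subset_univ _)
  intro r _ hr
  simp only [Finset.mem_insert, Finset.mem_filter, Finset.mem_univ, true_and, not_or,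
    not_and, not_forall, not_not] at hr
  obtain ⟨s, rfl⟩ := hr.2 hr.1
  exact wf_zero d μ f s
end
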